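/- Let K ⊆ ℝ² be a compact convex set with nonempty interior, with area A, boundary length L, circumradius R and inradius r. Then the Bonnesen-type inequality L² − 4πA ≥ A²·(1/r − 1/R)² holds. -/

import Mathlib

open Set MeasureTheory

noncomputable section

/-- The inradius of a set `K ⊆ ℝ²`: the supremum of radii `ρ ≥ 0` of closed balls
contained in `K`. -/
def inradius (K : Set (EuclideanSpace ℝ (Fin 2))) : ℝ :=
  sSup { ρ : ℝ | 0 ≤ ρ ∧ ∃ c : EuclideanSpace ℝ (Fin 2), Metric.closedBall c ρ ⊆ K }

/-- The circumradius of a set `K ⊆ ℝ²`: the infimum of radii `ρ ≥ 0` of closed balls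
containing `K`. -/
def circumradius (K : Set (EuclideanSpace ℝ (Fin 2))) : ℝ :=
  sInf { ρ : ℝ | 0 ≤ ρ ∧ ∃ c : EuclideanSpace ℝ (Fin 2), K ⊆ Metric.closedBall c ρ }

/-!
Let `h` be the support function of `K`. At a largest inscribed or smallest circumscribed disc, of
radius `ρ`, every closed half-plane through the centre contains a direction in which `K` and the
disc have a common boundary point with a common supporting line. Hence some such directions cut the
plane into sectors of angle at most `π`; slicing half of a sector parallel to its bisector bounds
the area in it by the integral of `ρ h - ρ² / 2`. Adding up, `A + π ρ² ≤ ρ ∫ h ≤ ρ L`, the last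
step being an averaged width estimate for closed curves through the boundary points. So
`A x² - L x + π ≤ 0` both at `x = 1 / r` and at `x = 1 / R`: the roots of this quadratic are at
least `1 / r - 1 / R` apart, which is a lower bound on its discriminant `L² - 4 π A`.

A convex boundary curve is rectifiable because a line through an interior point meets the boundary
at most twice, so almost every level of a coordinate is attained a bounded number of times.
-/

open scoped RealInnerProductSpace Real Topology ENNReal Pointwise

section SupportFunction

variable {E F : Type*} [NormedAddCommGroup E] [InnerProductSpace ℝ E]
  [NormedAddCommGroup F] [InnerProductSpace ℝ F] {K : Set E} {c u z : E} {ρ : ℝ}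

/-- The support function `h_K(u) = sup {⟪u, x⟫ | x ∈ K}` of a set `K`. It is meaningful for bounded
nonempty `K` only, `sSup` being `0` otherwise. -/
def supportFun (K : Set E) (u : E) : ℝ := sSup ((fun x ↦ ⟪u, x⟫) '' K)

lemma inner_le_supportFun (hK : IsCompact K) (hz : z ∈ K) (u : E) : ⟪u, z⟫ ≤ supportFun K u :=
  le_csSup (hK.image (by fun_prop)).bddAbove (mem_image_of_mem _ hz)

lemma continuous_supportFun (hK : IsCompact K) : Continuous (supportFun K) :=
  hK.continuous_sSup (f := fun u x ↦ ⟪u, x⟫) continuous_inner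

lemma exists_inner_eq_supportFun (hK : IsCompact K) (hne : K.Nonempty) (u : E) :
    ∃ z ∈ K, ⟪u, z⟫ = supportFun K u :=
  (hK.image (by fun_prop)).sSup_mem (hne.image _)

lemma supportFun_image (f : E ≃ₗᵢ[ℝ] F) (K : Set E) (u : E) :
    supportFun (f '' K) (f u) = supportFun K u := by
  simp only [supportFun, image_image, LinearIsometryEquiv.inner_map_map]

lemma mem_frontier_of_inner_eq_supportFun (hK : IsCompact K) (hu : u ≠ 0) (hz : z ∈ K)
    (h : ⟪u, z⟫ = supportFun K u) : z ∈ frontier K := by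
  rw [hK.isClosed.frontier_eq]
  refine ⟨hz, fun hint ↦ ?_⟩
  have hmax : IsLocalMax (fun x ↦ ⟪u, x⟫) z := by
    filter_upwards [mem_interior_iff_mem_nhds.1 hint] with x hx
    exact (inner_le_supportFun hK hx u).trans_eq h.symm
  have hderiv : innerSL ℝ u = 0 := hmax.hasFDerivAt_eq_zero (innerSL ℝ u).hasFDerivAt
  exact hu (by simpa using congr($hderiv u))

lemma exists_supportFun_lt_inner [CompleteSpace E] (hconv : Convex ℝ K) (hK : IsCompact K)
    (hne : K.Nonempty) (hz : z ∉ K) : ∃ u : E, ‖u‖ = 1 ∧ supportFun K u < ⟪u, z⟫ := by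
  obtain ⟨f, s, hf, hs⟩ := geometric_hahn_banach_closed_point hconv hK.isClosed hz
  set w := (InnerProductSpace.toDual ℝ E).symm f
  have hw (x : E) : ⟪w, x⟫ = f x := InnerProductSpace.toDual_symm_apply
  obtain ⟨y, hy⟩ := hne
  have hw0 : w ≠ 0 := by
    intro h
    have hfy := hf y hy
    rw [← hw, h, inner_zero_left] at hfy hs
    exact (hfy.trans hs).false
  refine ⟨‖w‖⁻¹ • w, norm_smul_inv_norm hw0, ?_⟩
  obtain ⟨x, hx, hmax⟩ := exists_inner_eq_supportFun hK ⟨y, hy⟩ (‖w‖⁻¹ • w)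
  rw [← hmax, real_inner_smul_left, real_inner_smul_left, hw, hw]
  exact mul_lt_mul_of_pos_left ((hf x hx).trans hs) (by positivity)

/-- The directions `u` in which `K` touches the sphere of centre `c` and radius `ρ`: the point
`c + ρ u` lies in `K` and the tangent hyperplane of the sphere there supports `K`. -/
def contactDirections (K : Set E) (c : E) (ρ : ℝ) : Set E :=
  {u | ‖u‖ = 1 ∧ c + ρ • u ∈ K ∧ ∀ x ∈ K, ⟪u, x - c⟫ ≤ ρ}

lemma isClosed_contactDirections (hK : IsClosed K) (c : E) (ρ : ℝ) :
    IsClosed (contactDirections K c ρ) := by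
  have heq : contactDirections K c ρ = {u | ‖u‖ = 1} ∩ ((fun u ↦ c + ρ • u) ⁻¹' K ∩
      ⋂ x ∈ K, {u | ⟪u, x - c⟫ ≤ ρ}) := by
    ext u
    simp [contactDirections]
  rw [heq]
  exact (isClosed_eq continuous_norm continuous_const).inter ((hK.preimage (by fun_prop)).inter
    (isClosed_biInter fun x _ ↦ isClosed_le (by fun_prop) continuous_const))

lemma mem_contactDirections_image (f : E ≃ᵃⁱ[ℝ] F) (hu : u ∈ contactDirections K c ρ) :
    f.linearIsometryEquiv u ∈ contactDirections (f '' K) (f c) ρ := by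
  obtain ⟨hnorm, hmem, hle⟩ := hu
  refine ⟨by simpa using hnorm, ⟨c + ρ • u, hmem, ?_⟩, ?_⟩
  · rw [add_comm, ← vadd_eq_add, f.map_vadd, map_smul, vadd_eq_add, add_comm]
  · rintro _ ⟨x, hx, rfl⟩
    rw [← vsub_eq_sub, ← f.map_vsub, LinearIsometryEquiv.inner_map_map]
    exact hle x hx

end SupportFunction

section ExtremalBalls

open Filter Metric

/-- A Danskin-type first-order condition: near-maximisers of `f + t g` accumulate, as `t ↓ 0`, at
the required maximiser of `f`. -/
lemma exists_eq_and_nonneg_of_le_add_mul {X : Type*} [TopologicalSpace X] {s : Set X}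
    (hs : IsCompact s) {f g : X → ℝ} {M C : ℝ} (hf : ContinuousOn f s) (hg : ContinuousOn g s)
    (hM : ∀ x ∈ s, f x ≤ M) (h : ∀ t > 0, ∃ x ∈ s, M ≤ f x + t * g x + t ^ 2 * C) :
    ∃ x ∈ s, f x = M ∧ 0 ≤ g x := by
  have : Nonempty X := ⟨(h 1 one_pos).choose⟩
  choose! x hxs hx using h
  let l : Ultrafilter ℝ := Ultrafilter.of (𝓝[>] 0)
  have hl : (l : Filter ℝ) ≤ 𝓝[>] 0 := Ultrafilter.of_le _
  have hpos : ∀ᶠ t in (l : Filter ℝ), 0 < t := hl self_mem_nhdsWithin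
  have htendsto : Tendsto id (l : Filter ℝ) (𝓝 0) := hl.trans nhdsWithin_le_nhds
  obtain ⟨p, hps, hp⟩ := hs.ultrafilter_le_nhds (l.map x)
    (le_principal_iff.2 (hpos.mono hxs))
  have hxp : Tendsto x l (𝓝[s] p) :=
    tendsto_nhdsWithin_iff.2 ⟨hp, hpos.mono hxs⟩
  have hfp : Tendsto (f ∘ x) l (𝓝 (f p)) := (hf p hps).tendsto.comp hxp
  have hgp : Tendsto (g ∘ x) l (𝓝 (g p)) := (hg p hps).tendsto.comp hxp
  refine ⟨p, hps, (hM p hps).antisymm ?_, ?_⟩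
  · have hlim := (hfp.add (htendsto.mul hgp)).add ((htendsto.pow 2).mul_const C)
    rw [zero_mul, zero_pow two_ne_zero, zero_mul, add_zero, add_zero] at hlim
    exact ge_of_tendsto hlim (hpos.mono hx)
  · have hlim := hgp.add (htendsto.mul_const C)
    rw [zero_mul, add_zero] at hlim
    refine ge_of_tendsto hlim (hpos.mono fun t ht ↦ ?_)
    have hprod : 0 ≤ t * (g (x t) + t * C) := by linarith [hx t ht, hM _ (hxs t ht)]
    exact nonneg_of_mul_nonneg_right hprod ht

variable {E : Type*} [NormedAddCommGroup E] [InnerProductSpace ℝ E] {K : Set E} {c : E} {r R : ℝ}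

/-- Translating a largest inscribed ball by a small `t v` cannot make room for a ball of radius
`r + t²`; a separating direction for each `t` feeds the first-order condition. -/
lemma exists_mem_contactDirections_of_inscribed [FiniteDimensional ℝ E] (hconv : Convex ℝ K)
    (hK : IsCompact K) (hr : 0 ≤ r) (hball : closedBall c r ⊆ K)
    (hmax : ∀ c' r', 0 ≤ r' → closedBall c' r' ⊆ K → r' ≤ r) (v : E) :
    ∃ u ∈ contactDirections K c r, 0 ≤ ⟪v, u⟫ := by
  have hne : K.Nonempty := ⟨c, hball (mem_closedBall_self hr)⟩
  have hcontact {u : E} (hu : ‖u‖ = 1) : c + r • u ∈ K :=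
    hball (by simp [mem_closedBall, dist_eq_norm, norm_smul, hu, abs_of_nonneg hr])
  have hle (u : E) (hu : u ∈ sphere (0 : E) 1) : ⟪u, c⟫ - supportFun K u ≤ -r := by
    have hu1 : ‖u‖ = 1 := by simpa using hu
    have hinner := inner_le_supportFun hK (hcontact hu1) u
    rw [inner_add_right, real_inner_smul_right, real_inner_self_eq_norm_sq, hu1] at hinner
    linarith
  have happrox (t : ℝ) (ht : 0 < t) :
      ∃ u ∈ sphere (0 : E) 1, -r ≤ ⟪u, c⟫ - supportFun K u + t * ⟪v, u⟫ + t ^ 2 * 1 := by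
    have hnot : ¬ closedBall (c + t • v) (r + t ^ 2) ⊆ K := fun h ↦ by
      linarith [hmax _ _ (by positivity) h, pow_pos ht 2]
    obtain ⟨z, hz, hzK⟩ := not_subset.1 hnot
    obtain ⟨u, hu, hlt⟩ := exists_supportFun_lt_inner hconv hK hne hzK
    refine ⟨u, by simpa using hu, ?_⟩
    have hzc : ⟪u, z - (c + t • v)⟫ ≤ r + t ^ 2 := by
      refine (real_inner_le_norm _ _).trans ?_
      rwa [hu, one_mul, ← mem_closedBall_iff_norm]
    rw [inner_sub_right, inner_add_right, real_inner_smul_right, real_inner_comm v u] at hzc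
    linarith
  have hcont : Continuous fun u ↦ ⟪u, c⟫ - supportFun K u :=
    (continuous_id.inner continuous_const).sub (continuous_supportFun hK)
  obtain ⟨u, hu, hsupp, huv⟩ := exists_eq_and_nonneg_of_le_add_mul (isCompact_sphere (0 : E) 1)
    hcont.continuousOn (by fun_prop) hle happrox
  refine ⟨u, ⟨by simpa using hu, hcontact (by simpa using hu), fun x hx ↦ ?_⟩, huv⟩
  rw [inner_sub_right]
  linarith [inner_le_supportFun hK hx u]

lemma exists_mem_contactDirections_of_circumscribed (hK : IsCompact K) (hR : 0 < R)
    (hball : K ⊆ closedBall c R) (hmin : ∀ c' r', 0 ≤ r' → K ⊆ closedBall c' r' → R ≤ r') (v : E) :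
    ∃ u ∈ contactDirections K c R, 0 ≤ ⟪v, u⟫ := by
  have hne : K.Nonempty := by
    by_contra! hempty
    exact hR.not_ge (hmin c 0 le_rfl (hempty ▸ empty_subset _))
  have hnorm (x : E) (hx : x ∈ K) : ‖x - c‖ ≤ R := mem_closedBall_iff_norm.1 (hball hx)
  have happrox (t : ℝ) (_ : 0 < t) :
      ∃ p ∈ K, R ^ 2 ≤ ‖p - c‖ ^ 2 + t * (2 * ⟪v, p - c⟫) + t ^ 2 * ‖v‖ ^ 2 := by
    obtain ⟨p, hp, hpmax⟩ := hK.exists_isMaxOn hne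
      (f := fun p ↦ ‖p - (c - t • v)‖) (by fun_prop)
    have hRp : R ≤ ‖(p - c) + t • v‖ := by
      rw [sub_add]
      exact hmin _ _ (norm_nonneg _) fun x hx ↦ mem_closedBall_iff_norm.2 (hpmax hx)
    refine ⟨p, hp, (pow_le_pow_left₀ hR.le hRp 2).trans_eq ?_⟩
    rw [norm_add_sq_real, norm_smul, real_inner_smul_right, real_inner_comm, mul_pow,
      Real.norm_eq_abs, sq_abs]
    ring
  obtain ⟨p, hp, hpsq, hpv⟩ := exists_eq_and_nonneg_of_le_add_mul hK (by fun_prop) (by fun_prop)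
    (fun p hp ↦ pow_le_pow_left₀ (norm_nonneg _) (hnorm p hp) 2) happrox
  have hpR : ‖p - c‖ = R := (sq_eq_sq₀ (norm_nonneg _) hR.le).1 hpsq
  have hunit : ‖R⁻¹ • (p - c)‖ = 1 := by
    rw [norm_smul, hpR, norm_inv, Real.norm_of_nonneg hR.le, inv_mul_cancel₀ hR.ne']
  refine ⟨R⁻¹ • (p - c), ⟨hunit, ?_, fun x hx ↦ ?_⟩, ?_⟩
  · rwa [smul_inv_smul₀ hR.ne', add_sub_cancel]
  · refine (real_inner_le_norm _ _).trans ?_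
    rw [hunit, one_mul]
    exact hnorm x hx
  · rw [real_inner_smul_right]
    exact mul_nonneg (by positivity) (by linarith)

lemma isCompact_radius_closedBall_subset [Nontrivial E] (hK : IsCompact K) :
    IsCompact {ρ : ℝ | 0 ≤ ρ ∧ ∃ c, closedBall c ρ ⊆ K} := by
  let Z : Set (E × ℝ) :=
    (K ×ˢ Icc 0 (diam K)) ∩ ⋂ u ∈ closedBall (0 : E) 1, {p | p.1 + p.2 • u ∈ K}
  have hZ : IsCompact Z := (hK.prod isCompact_Icc).inter_right
    (isClosed_biInter fun u _ ↦ hK.isClosed.preimage (by fun_prop))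
  have hiff {c : E} {ρ : ℝ} (hρ : 0 ≤ ρ) :
      closedBall c ρ ⊆ K ↔ ∀ u ∈ closedBall (0 : E) 1, c + ρ • u ∈ K := by
    rw [← affinity_unitClosedBall hρ, ← image_vadd, ← image_smul, image_image]
    exact image_subset_iff
  convert hZ.image continuous_snd using 1
  ext ρ
  constructor
  · rintro ⟨hρ, c, hc⟩
    have hdiam : 2 * ρ ≤ diam K := diam_closedBall_eq c hρ ▸ diam_mono hc hK.isBounded
    exact ⟨(c, ρ), ⟨⟨hc (mem_closedBall_self hρ), hρ, by linarith⟩,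
      mem_iInter₂.2 ((hiff hρ).1 hc)⟩, rfl⟩
  · rintro ⟨⟨c, ρ⟩, ⟨⟨-, hρ, -⟩, hc⟩, rfl⟩
    exact ⟨hρ, c, (hiff hρ).2 (mem_iInter₂.1 hc)⟩

lemma exists_isLeast_radius_subset_closedBall {X : Type*} [PseudoMetricSpace X] [ProperSpace X]
    {K : Set X} (hK : Bornology.IsBounded K) (hne : K.Nonempty) :
    ∃ R, IsLeast {ρ : ℝ | 0 ≤ ρ ∧ ∃ c, K ⊆ closedBall c ρ} R := by
  obtain ⟨x, hx⟩ := hne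
  obtain ⟨D, hD⟩ := hK.subset_closedBall x
  have hD0 : 0 ≤ D := dist_self x ▸ hD hx
  let Z : Set (X × ℝ) := (closedBall x D ×ˢ Icc 0 D) ∩ ⋂ y ∈ K, {p | dist y p.1 ≤ p.2}
  have hZ : IsCompact Z := ((isCompact_closedBall x D).prod isCompact_Icc).inter_right
    (isClosed_biInter fun y _ ↦ isClosed_le (by fun_prop) continuous_snd)
  have hZne : Z.Nonempty :=
    ⟨(x, D), ⟨mem_closedBall_self hD0, hD0, le_rfl⟩, mem_iInter₂.2 fun y hy ↦ hD hy⟩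
  obtain ⟨⟨c, R⟩, ⟨⟨-, hR, hRD⟩, hcR⟩, hmin⟩ := hZ.exists_isMinOn hZne continuous_snd.continuousOn
  refine ⟨R, ⟨hR, c, fun y hy ↦ mem_iInter₂.1 hcR y hy⟩, fun ρ ⟨hρ, c', hc'⟩ ↦ ?_⟩
  rcases le_total ρ D with hρD | hDρ
  · exact hmin (show (c', ρ) ∈ Z from ⟨⟨(mem_closedBall_comm.1 (hc' hx)).trans hρD, hρ, hρD⟩,
      mem_iInter₂.2 fun y hy ↦ hc' hy⟩)
  · exact hRD.trans hDρ

end ExtremalBalls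

lemma volume_image_of_isometry {E F : Type*} [NormedAddCommGroup E] [InnerProductSpace ℝ E]
    [FiniteDimensional ℝ E] [MeasurableSpace E] [BorelSpace E] [NormedAddCommGroup F]
    [InnerProductSpace ℝ F] [FiniteDimensional ℝ F] [MeasurableSpace F] [BorelSpace F]
    (h : Module.finrank ℝ E = Module.finrank ℝ F) {f : E → F} (hf : Isometry f) (s : Set E) :
    volume (f '' s) = volume s := by
  rw [← InnerProductSpace.euclideanHausdorffMeasure_eq_volume (V := F), ← h,
    hf.euclideanHausdorffMeasure_image, InnerProductSpace.euclideanHausdorffMeasure_eq_volume]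

section SectorArea

open Real (pi_pos)

variable {K M : Set ℂ} {a b c ρ β θ φ : ℝ}

lemma inner_circleExp (φ : ℝ) (z : ℂ) :
    ⟪(Circle.exp φ : ℂ), z⟫ = z.re * Real.cos φ + z.im * Real.sin φ := by
  simp [Complex.inner, Circle.coe_exp, Complex.exp_ofReal_mul_I_re, Complex.exp_ofReal_mul_I_im]

lemma inner_circleExp_circleExp (φ θ : ℝ) :
    ⟪(Circle.exp φ : ℂ), (Circle.exp θ : ℂ)⟫ = Real.cos (θ - φ) := by
  rw [inner_circleExp, Circle.coe_exp, Complex.exp_ofReal_mul_I_re, Complex.exp_ofReal_mul_I_im,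
    Real.cos_sub]

lemma continuous_supportFun_circleExp (hK : IsCompact K) :
    Continuous fun θ : ℝ ↦ supportFun K (Circle.exp θ) :=
  (continuous_supportFun hK).comp (by fun_prop)

/-- The closed circular sector of the plane formed by the rays from the origin whose angle lies in
`[a, b]`. -/
def sector (a b : ℝ) : Set ℂ :=
  {z | ∃ s : ℝ, 0 ≤ s ∧ ∃ θ ∈ Icc a b, z = s * Circle.exp θ}

lemma sector_subset_union (a b c : ℝ) : sector a c ⊆ sector a b ∪ sector b c := by
  rintro _ ⟨s, hs, θ, hθ, rfl⟩
  rcases le_total θ b with hθb | hbθ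
  · exact Or.inl ⟨s, hs, θ, ⟨hθ.1, hθb⟩, rfl⟩
  · exact Or.inr ⟨s, hs, θ, ⟨hbθ, hθ.2⟩, rfl⟩

lemma sector_add_two_pi (a : ℝ) : sector a (a + 2 * π) = univ := by
  refine eq_univ_of_forall fun z ↦ ⟨‖z‖, norm_nonneg z, toIcoMod Real.two_pi_pos a z.arg,
    Ico_subset_Icc_self (toIcoMod_mem_Ico _ _ _), ?_⟩
  rw [toIcoMod, zsmul_eq_mul, (Circle.periodic_exp.sub_int_mul_eq _), Circle.coe_exp,
    Complex.norm_mul_exp_arg_mul_I]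

/-- The wedge between the positive real axis and the ray of angle `β`. It coincides with
`sector 0 β` for `0 < β < π`, but its definition by inequalities makes closedness and slices
evident. -/
def wedge (β : ℝ) : Set ℂ := {z | 0 ≤ z.im ∧ z.im * Real.cos β ≤ z.re * Real.sin β}

lemma isClosed_wedge (β : ℝ) : IsClosed (wedge β) :=
  (isClosed_le (by fun_prop) (by fun_prop)).and (isClosed_le (by fun_prop) (by fun_prop))

lemma sector_zero_subset_wedge (hβ : β ≤ π) : sector 0 β ⊆ wedge β := by
  rintro _ ⟨s, hs, θ, hθ, rfl⟩
  change 0 ≤ (s * _ : ℂ).im ∧ (s * _ : ℂ).im * _ ≤ (s * _ : ℂ).re * _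
  rw [Complex.re_ofReal_mul, Complex.im_ofReal_mul, Circle.coe_exp,
    Complex.exp_ofReal_mul_I_re, Complex.exp_ofReal_mul_I_im]
  have hsin : 0 ≤ Real.sin θ := Real.sin_nonneg_of_nonneg_of_le_pi hθ.1 (hθ.2.trans hβ)
  have hsub : 0 ≤ s * Real.sin (β - θ) := mul_nonneg hs
    (Real.sin_nonneg_of_nonneg_of_le_pi (by linarith [hθ.2]) (by linarith [hθ.1]))
  rw [Real.sin_sub] at hsub
  exact ⟨mul_nonneg hs hsin, by linarith⟩

lemma volume_eq_lintegral_horizontal_slice {S : Set ℂ} (hS : MeasurableSet S) :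
    volume S = ∫⁻ y, volume {x : ℝ | (⟨x, y⟩ : ℂ) ∈ S} := by
  rw [← Complex.volume_preserving_equiv_real_prod.symm.measure_preimage_equiv S,
    Measure.volume_eq_prod,
    Measure.prod_apply_symm (Complex.measurableEquivRealProd.symm.measurable hS)]
  rfl

lemma volume_eq_lintegral_horizontal_slice_comp {S : Set ℂ} (hS : MeasurableSet S) {f f' : ℝ → ℝ}
    {t : Set ℝ} (ht : MeasurableSet t) (hf : ∀ x ∈ t, HasDerivWithinAt f (f' x) t x)
    (hinj : InjOn f t) (him : ∀ z ∈ S, z.im ∈ f '' t) :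
    volume S = ∫⁻ φ in t, ENNReal.ofReal |f' φ| * volume {x : ℝ | (⟨x, f φ⟩ : ℂ) ∈ S} := by
  have hsupp : Function.support (fun y ↦ volume {x : ℝ | (⟨x, y⟩ : ℂ) ∈ S}) ⊆ f '' t := by
    intro y hy
    obtain ⟨x, hx⟩ := nonempty_of_measure_ne_zero hy
    exact him _ hx
  rw [volume_eq_lintegral_horizontal_slice hS, ← setLIntegral_eq_of_support_subset hsupp,
    lintegral_image_eq_lintegral_abs_deriv_mul ht hf hinj]

lemma integral_sin_mul_cos_sub (β : ℝ) :
    ∫ φ in 0..β, Real.sin φ * Real.cos (β - φ) = β * Real.sin β / 2 := by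
  have hprod (φ : ℝ) : Real.sin φ * Real.cos (β - φ) =
      (Real.sin β + Real.sin (2 * φ - β)) / 2 := by
    have h₁ : β = φ + (β - φ) := by ring
    have h₂ : 2 * φ - β = φ - (β - φ) := by ring
    rw [h₂, Real.sin_sub φ]
    nth_rw 2 [h₁]
    rw [Real.sin_add]
    ring
  simp_rw [hprod, intervalIntegral.integral_div]
  rw [intervalIntegral.integral_add (by simp) (by apply Continuous.intervalIntegrable; fun_prop),
    intervalIntegral.integral_comp_mul_sub (fun x ↦ Real.sin x) two_ne_zero, integral_sin]
  have : 2 * β - β = β := by ring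
  simp [this]

/-- The factor `ρ cos φ` is the Jacobian of the height `ρ sin φ`, at which the slice runs from the
ray of angle `β` to the supporting line with normal direction `φ`. -/
lemma ofReal_mul_volume_slice_le (hM : IsCompact M) (hρ : 0 < ρ) (hβ : β ≤ π / 2)
    (hφ : φ ∈ Ioo 0 β) :
    ENNReal.ofReal |ρ * Real.cos φ| *
        volume {x : ℝ | (⟨x, ρ * Real.sin φ⟩ : ℂ) ∈ M ∩ wedge β} ≤
      ENNReal.ofReal (ρ * (supportFun M (Circle.exp φ) -
        ρ * (Real.sin φ * Real.cos (β - φ) / Real.sin β))) := by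
  have hcos : 0 < Real.cos φ :=
    Real.cos_pos_of_mem_Ioo ⟨by linarith [hφ.1, pi_pos], by linarith [hφ.2]⟩
  have hsin : 0 < Real.sin β :=
    Real.sin_pos_of_pos_of_lt_pi (hφ.1.trans hφ.2) (by linarith [pi_pos])
  set H := supportFun M (Circle.exp φ)
  have hslice : {x : ℝ | (⟨x, ρ * Real.sin φ⟩ : ℂ) ∈ M ∩ wedge β} ⊆
      Icc (ρ * Real.sin φ * Real.cos β / Real.sin β)
        ((H - ρ * Real.sin φ ^ 2) / Real.cos φ) := by
    rintro x ⟨hxM, -, hx⟩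
    have hsupp := inner_le_supportFun hM hxM (Circle.exp φ)
    rw [inner_circleExp] at hsupp
    exact ⟨(div_le_iff₀ hsin).2 hx, (le_div_iff₀ hcos).2 (by linarith)⟩
  rw [abs_of_pos (mul_pos hρ hcos)]
  refine (mul_le_mul_right (measure_mono hslice) _).trans_eq ?_
  rw [Real.volume_Icc, ← ENNReal.ofReal_mul (mul_pos hρ hcos).le, Real.cos_sub]
  congr 1
  field_simp
  ring

lemma im_mem_image_of_mem_contactDirections (hβ₀ : 0 ≤ β) (hβ : β ≤ π / 2)
    (hcontact : (Circle.exp β : ℂ) ∈ contactDirections M 0 ρ) {z : ℂ} (hz : z ∈ M)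
    (hwedge : z ∈ wedge β) :
    z.im ∈ (fun φ ↦ ρ * Real.sin φ) '' Icc 0 β := by
  obtain ⟨him, hray⟩ := hwedge
  have hsin : 0 ≤ Real.sin β := Real.sin_nonneg_of_nonneg_of_le_pi hβ₀ (by linarith [pi_pos])
  have hcos : 0 ≤ Real.cos β := Real.cos_nonneg_of_mem_Icc ⟨by linarith [pi_pos], hβ⟩
  have hsupp : z.re * Real.cos β + z.im * Real.sin β ≤ ρ := by
    simpa only [sub_zero, inner_circleExp] using hcontact.2.2 z hz
  have hmax : z.im ≤ ρ * Real.sin β := calc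
    z.im = z.im * Real.cos β * Real.cos β + z.im * Real.sin β * Real.sin β := by
      linear_combination -z.im * Real.sin_sq_add_cos_sq β
    _ ≤ z.re * Real.sin β * Real.cos β + z.im * Real.sin β * Real.sin β := by gcongr
    _ = (z.re * Real.cos β + z.im * Real.sin β) * Real.sin β := by ring
    _ ≤ ρ * Real.sin β := by gcongr
  refine intermediate_value_Icc hβ₀ (by fun_prop) ?_
  simpa using And.intro him hmax

lemma volume_eq_lintegral_sin_slice (hM : IsCompact M) (hρ : 0 < ρ) (hβ₀ : 0 ≤ β)
    (hβ : β ≤ π / 2) (hcontact : (Circle.exp β : ℂ) ∈ contactDirections M 0 ρ) :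
    volume (M ∩ wedge β) =
      ∫⁻ φ in Ioo 0 β, ENNReal.ofReal |ρ * Real.cos φ| *
        volume {x : ℝ | (⟨x, ρ * Real.sin φ⟩ : ℂ) ∈ M ∩ wedge β} := by
  rw [setLIntegral_congr Ioo_ae_eq_Icc]
  refine volume_eq_lintegral_horizontal_slice_comp
    (hM.isClosed.inter (isClosed_wedge β)).measurableSet measurableSet_Icc
    (fun φ _ ↦ ((Real.hasDerivAt_sin φ).const_mul ρ).hasDerivWithinAt)
    (fun x hx y hy hxy ↦ ?_)
    fun z hz ↦ im_mem_image_of_mem_contactDirections hβ₀ hβ hcontact hz.1 hz.2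
  exact Real.injOn_sin ⟨by linarith [hx.1, pi_pos], by linarith [hx.2]⟩
    ⟨by linarith [hy.1, pi_pos], by linarith [hy.2]⟩ (mul_left_cancel₀ hρ.ne' hxy)

lemma mul_cos_sub_le_supportFun (hM : IsCompact M)
    (hcontact : (Circle.exp θ : ℂ) ∈ contactDirections M 0 ρ) (φ : ℝ) :
    ρ * Real.cos (θ - φ) ≤ supportFun M (Circle.exp φ) := by
  have hle := inner_le_supportFun hM hcontact.2.1 (Circle.exp φ)
  rwa [zero_add, real_inner_smul_right, inner_circleExp_circleExp] at hle

lemma integral_sub_sin_mul_cos_sub_div {H : ℝ → ℝ} (hH : Continuous H) (ρ : ℝ) (hβ₀ : 0 ≤ β)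
    (hβ : β < π) :
    ∫ φ in 0..β, ρ * (H φ - ρ * (Real.sin φ * Real.cos (β - φ) / Real.sin β)) =
      ∫ φ in 0..β, (ρ * H φ - ρ ^ 2 / 2) := by
  rcases hβ₀.eq_or_lt with rfl | hpos
  · simp
  have hsin : Real.sin β ≠ 0 := (Real.sin_pos_of_pos_of_lt_pi hpos hβ).ne'
  have hsplit (φ : ℝ) : ρ * (H φ - ρ * (Real.sin φ * Real.cos (β - φ) / Real.sin β)) =
      ρ * H φ - ρ ^ 2 / Real.sin β * (Real.sin φ * Real.cos (β - φ)) := by ring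
  simp_rw [hsplit]
  rw [intervalIntegral.integral_sub, intervalIntegral.integral_sub,
    intervalIntegral.integral_const_mul (ρ ^ 2 / _), integral_sin_mul_cos_sub,
    intervalIntegral.integral_const, smul_eq_mul]
  · field_simp
    ring
  all_goals exact Continuous.intervalIntegrable (by fun_prop) _ _

lemma mul_supportFun_sub_nonneg (hM : IsCompact M) (hρ : 0 ≤ ρ) (hβ : β ≤ π / 2)
    (hcontact : (Circle.exp β : ℂ) ∈ contactDirections M 0 ρ) (hφ : φ ∈ Icc 0 β) :
    0 ≤ ρ * (supportFun M (Circle.exp φ) -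
      ρ * (Real.sin φ * Real.cos (β - φ) / Real.sin β)) := by
  have hsin : 0 ≤ Real.sin β :=
    Real.sin_nonneg_of_nonneg_of_le_pi (hφ.1.trans hφ.2) (by linarith [pi_pos])
  have hcos : 0 ≤ Real.cos (β - φ) :=
    Real.cos_nonneg_of_mem_Icc ⟨by linarith [hφ.2, pi_pos], by linarith [hφ.1]⟩
  have hle : Real.sin φ ≤ Real.sin β :=
    Real.sin_le_sin_of_le_of_le_pi_div_two (by linarith [hφ.1, pi_pos]) hβ hφ.2
  have hquot : Real.sin φ * Real.cos (β - φ) / Real.sin β ≤ Real.cos (β - φ) :=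
    div_le_of_le_mul₀ hsin hcos (by rw [mul_comm]; gcongr)
  have hsupp := mul_cos_sub_le_supportFun hM hcontact φ
  exact mul_nonneg hρ (by linarith [mul_le_mul_of_nonneg_left hquot hρ])

lemma measureReal_inter_sector_zero_le (hM : IsCompact M) (hρ : 0 < ρ) (hβ₀ : 0 ≤ β)
    (hβ : β ≤ π / 2) (hcontact : (Circle.exp β : ℂ) ∈ contactDirections M 0 ρ) :
    volume.real (M ∩ sector 0 β) ≤
      ∫ φ in 0..β, (ρ * supportFun M (Circle.exp φ) - ρ ^ 2 / 2) := by
  have hβπ : β < π := by linarith [pi_pos]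
  let G (φ : ℝ) : ℝ := ρ * (supportFun M (Circle.exp φ) -
    ρ * (Real.sin φ * Real.cos (β - φ) / Real.sin β))
  have hGcont : Continuous G := by
    have := continuous_supportFun_circleExp hM
    fun_prop
  have hGnonneg : ∀ φ ∈ Icc 0 β, 0 ≤ G φ := fun φ ↦ mul_supportFun_sub_nonneg hM hρ.le hβ hcontact
  have hle : volume (M ∩ wedge β) ≤ ENNReal.ofReal (∫ φ in 0..β, G φ) := by
    rw [volume_eq_lintegral_sin_slice hM hρ hβ₀ hβ hcontact,
      intervalIntegral.integral_of_le hβ₀, ofReal_integral_eq_lintegral_ofReal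
        (hGcont.intervalIntegrable 0 β).1, ← setLIntegral_congr Ioo_ae_eq_Ioc]
    · exact setLIntegral_mono (by fun_prop) fun φ hφ ↦ ofReal_mul_volume_slice_le hM hρ hβ hφ
    · exact (ae_restrict_mem measurableSet_Ioc).mono fun φ hφ ↦
        hGnonneg φ (Ioc_subset_Icc_self hφ)
  have hsubset : M ∩ sector 0 β ⊆ M ∩ wedge β :=
    inter_subset_inter_right M (sector_zero_subset_wedge hβπ.le)
  rw [← integral_sub_sin_mul_cos_sub_div (continuous_supportFun_circleExp hM) ρ hβ₀ hβπ]
  exact ENNReal.toReal_le_of_le_ofReal (intervalIntegral.integral_nonneg hβ₀ hGnonneg)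
    ((measure_mono hsubset).trans hle)

lemma rotation_circleExp (ψ θ : ℝ) :
    rotation (Circle.exp ψ) (Circle.exp θ) = Circle.exp (θ + ψ) := by
  rw [rotation_apply, ← Circle.coe_mul, ← Circle.exp_add, add_comm]

lemma conjLIE_circleExp (θ : ℝ) : Complex.conjLIE (Circle.exp θ) = Circle.exp (-θ) := by
  rw [Complex.conjLIE_apply, Circle.exp_neg, Circle.coe_inv_eq_conj]

lemma map_mem_contactDirections_zero (f : ℂ ≃ₗᵢ[ℝ] ℂ) {u : ℂ}
    (hu : u ∈ contactDirections K 0 ρ) : f u ∈ contactDirections (f '' K) 0 ρ := by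
  simpa using mem_contactDirections_image f.toAffineIsometryEquiv hu

lemma measureReal_inter_le_of_map (f : ℂ ≃ₗᵢ[ℝ] ℂ) (hK : IsCompact K) {S T : Set ℂ}
    (hST : MapsTo f S T) : volume.real (K ∩ S) ≤ volume.real (f '' K ∩ T) := by
  rw [measureReal_def, ← volume_image_of_isometry rfl f.isometry, ← measureReal_def]
  refine measureReal_mono ?_ (measure_ne_top_of_subset inter_subset_left
    (hK.image f.continuous).measure_ne_top)
  exact (image_inter_subset _ _ _).trans (inter_subset_inter_right _ hST.image_subset)

lemma mapsTo_rotation_sector (ψ a b : ℝ) :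
    MapsTo (rotation (Circle.exp ψ)) (sector a b) (sector (a + ψ) (b + ψ)) := by
  rintro _ ⟨s, hs, θ, hθ, rfl⟩
  refine ⟨s, hs, θ + ψ, ⟨by linarith [hθ.1], by linarith [hθ.2]⟩, ?_⟩
  rw [← Complex.real_smul, map_smul, rotation_circleExp, Complex.real_smul]

lemma mapsTo_conjLIE_sector (a b : ℝ) :
    MapsTo Complex.conjLIE (sector a b) (sector (-b) (-a)) := by
  rintro _ ⟨s, hs, θ, hθ, rfl⟩
  refine ⟨s, hs, -θ, ⟨by linarith [hθ.2], by linarith [hθ.1]⟩, ?_⟩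
  rw [← Complex.real_smul, map_smul, conjLIE_circleExp, Complex.real_smul]

lemma measureReal_inter_sector_sub_le (hK : IsCompact K) (hρ : 0 < ρ) (hβ₀ : 0 ≤ β)
    (hβ : β ≤ π / 2) (hcontact : (Circle.exp θ : ℂ) ∈ contactDirections K 0 ρ) :
    volume.real (K ∩ sector (θ - β) θ) ≤
      ∫ φ in (θ - β)..θ, (ρ * supportFun K (Circle.exp φ) - ρ ^ 2 / 2) := by
  set f := rotation (Circle.exp (β - θ))
  have hmaps : MapsTo f (sector (θ - β) θ) (sector 0 β) := by
    simpa only [sub_add_sub_cancel, sub_self, add_sub_cancel] using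
      mapsTo_rotation_sector (β - θ) (θ - β) θ
  have hcontact' : (Circle.exp β : ℂ) ∈ contactDirections (f '' K) 0 ρ := by
    simpa only [f, rotation_circleExp, add_sub_cancel] using
      map_mem_contactDirections_zero f hcontact
  calc volume.real (K ∩ sector (θ - β) θ)
    _ ≤ volume.real (f '' K ∩ sector 0 β) := measureReal_inter_le_of_map f hK hmaps
    _ ≤ ∫ φ in 0..β, (ρ * supportFun (f '' K) (Circle.exp φ) - ρ ^ 2 / 2) :=
        measureReal_inter_sector_zero_le (hK.image f.continuous) hρ hβ₀ hβ hcontact'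
    _ = ∫ φ in (θ - β)..θ,
          (ρ * supportFun (f '' K) (Circle.exp (φ + (β - θ))) - ρ ^ 2 / 2) := by
        rw [intervalIntegral.integral_comp_add_right (fun φ ↦
          ρ * supportFun (f '' K) (Circle.exp φ) - ρ ^ 2 / 2), sub_add_sub_cancel, sub_self,
          add_sub_cancel]
    _ = ∫ φ in (θ - β)..θ, (ρ * supportFun K (Circle.exp φ) - ρ ^ 2 / 2) := by
        simp_rw [f, ← rotation_circleExp, supportFun_image]

lemma measureReal_inter_sector_add_le (hK : IsCompact K) (hρ : 0 < ρ) (hβ₀ : 0 ≤ β)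
    (hβ : β ≤ π / 2) (hcontact : (Circle.exp θ : ℂ) ∈ contactDirections K 0 ρ) :
    volume.real (K ∩ sector θ (θ + β)) ≤
      ∫ φ in θ..(θ + β), (ρ * supportFun K (Circle.exp φ) - ρ ^ 2 / 2) := by
  set f := Complex.conjLIE
  have hmaps : MapsTo f (sector θ (θ + β)) (sector (-θ - β) (-θ)) := by
    simpa only [neg_add'] using mapsTo_conjLIE_sector θ (θ + β)
  have hcontact' : (Circle.exp (-θ) : ℂ) ∈ contactDirections (f '' K) 0 ρ := by
    simpa only [f, conjLIE_circleExp] using map_mem_contactDirections_zero f hcontact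
  calc volume.real (K ∩ sector θ (θ + β))
    _ ≤ volume.real (f '' K ∩ sector (-θ - β) (-θ)) := measureReal_inter_le_of_map f hK hmaps
    _ ≤ ∫ φ in (-θ - β)..(-θ), (ρ * supportFun (f '' K) (Circle.exp φ) - ρ ^ 2 / 2) :=
        measureReal_inter_sector_sub_le (hK.image f.continuous) hρ hβ₀ hβ hcontact'
    _ = ∫ φ in θ..(θ + β), (ρ * supportFun (f '' K) (Circle.exp (-φ)) - ρ ^ 2 / 2) := by
        rw [intervalIntegral.integral_comp_neg (fun φ ↦
          ρ * supportFun (f '' K) (Circle.exp φ) - ρ ^ 2 / 2), neg_add']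
    _ = ∫ φ in θ..(θ + β), (ρ * supportFun K (Circle.exp φ) - ρ ^ 2 / 2) := by
        simp_rw [f, ← conjLIE_circleExp, supportFun_image]

lemma intervalIntegrable_supportFun_circleExp (hK : IsCompact K) (ρ a b : ℝ) :
    IntervalIntegrable (fun φ ↦ ρ * supportFun K (Circle.exp φ) - ρ ^ 2 / 2) volume a b := by
  have := continuous_supportFun_circleExp hK
  exact Continuous.intervalIntegrable (by fun_prop) a b

lemma measureReal_inter_sector_le_add (hK : IsCompact K) (a b c : ℝ) :
    volume.real (K ∩ sector a c) ≤ volume.real (K ∩ sector a b) + volume.real (K ∩ sector b c) := by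
  refine (measureReal_mono ?_ ?_).trans (measureReal_union_le _ _)
  · rw [← inter_union_distrib_left]
    exact inter_subset_inter_right K (sector_subset_union a b c)
  · rw [← inter_union_distrib_left]
    exact measure_ne_top_of_subset inter_subset_left hK.measure_ne_top

lemma measureReal_inter_sector_le (hK : IsCompact K) (hρ : 0 < ρ) (hab : a ≤ b)
    (hπ : b - a ≤ π) (ha : (Circle.exp a : ℂ) ∈ contactDirections K 0 ρ)
    (hb : (Circle.exp b : ℂ) ∈ contactDirections K 0 ρ) :
    volume.real (K ∩ sector a b) ≤
      ∫ φ in a..b, (ρ * supportFun K (Circle.exp φ) - ρ ^ 2 / 2) := by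
  have hβ₀ : 0 ≤ (b - a) / 2 := by linarith
  have hβ : (b - a) / 2 ≤ π / 2 := by linarith
  have hmid : b - (b - a) / 2 = a + (b - a) / 2 := by ring
  have hleft := measureReal_inter_sector_add_le hK hρ hβ₀ hβ ha
  have hright := measureReal_inter_sector_sub_le hK hρ hβ₀ hβ hb
  rw [hmid] at hright
  rw [← intervalIntegral.integral_add_adjacent_intervals
    (intervalIntegrable_supportFun_circleExp hK ρ a (a + (b - a) / 2))
    (intervalIntegrable_supportFun_circleExp hK ρ _ b)]
  exact (measureReal_inter_sector_le_add hK a _ b).trans (add_le_add hleft hright)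

lemma exists_circleExp_mem_contactDirections
    (hcontact : ∀ v : ℂ, ∃ u ∈ contactDirections K 0 ρ, 0 ≤ ⟪v, u⟫) (θ : ℝ) :
    ∃ t ∈ Icc θ (θ + π), (Circle.exp t : ℂ) ∈ contactDirections K 0 ρ := by
  obtain ⟨u, hu, hinner⟩ := hcontact (Circle.exp (θ + π / 2))
  set w : ℂ := (Circle.exp (-(θ + π / 2)) : ℂ) * u
  have hw : ‖w‖ = 1 := by rw [norm_mul, Circle.norm_coe, one_mul, hu.1]
  have hre : 0 ≤ w.re := by
    rwa [Complex.inner, ← Circle.coe_inv_eq_conj, ← Circle.exp_neg, mul_comm] at hinner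
  have harg := abs_le.1 (Complex.abs_arg_le_pi_div_two_iff.2 hre)
  refine ⟨θ + π / 2 + w.arg, ⟨by linarith [harg.1], by linarith [harg.2]⟩, ?_⟩
  have hwarg : (Circle.exp w.arg : ℂ) = w := by
    simpa [hw, Circle.coe_exp] using Complex.norm_mul_exp_arg_mul_I w
  rwa [Circle.exp_add, Circle.coe_mul, hwarg, ← mul_assoc, ← Circle.coe_mul, ← Circle.exp_add,
    add_neg_cancel, Circle.exp_zero, Circle.coe_one, one_mul]

/-- The middle point is the last one of `T` within a half period of the first. -/
lemma exists_triple_of_forall_exists_mem_Icc {T : Set ℝ} {p : ℝ} (hT : IsClosed T) (hp : 0 < p)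
    (hgap : ∀ x, ∃ t ∈ Icc x (x + p), t ∈ T) :
    ∃ a ∈ T, ∃ b ∈ T, ∃ c ∈ T,
      b ∈ Icc a (a + p) ∧ c ∈ Icc b (b + p) ∧ a + 2 * p ∈ Icc c (c + p) := by
  obtain ⟨a, -, ha⟩ := hgap 0
  obtain ⟨b, ⟨hbT, hab, hba⟩, hbmax⟩ := (isCompact_Icc.inter_left hT).exists_isGreatest
    ⟨a, ha, left_mem_Icc.2 (by linarith : a ≤ a + p)⟩
  obtain ⟨c, hcT, hc⟩ : ∃ c ∈ T, c ∈ Icc (a + p) (b + p) := by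
    by_contra! hnone
    have hbT' : b + p ∉ T := fun h ↦ hnone _ h ⟨by linarith, le_rfl⟩
    obtain ⟨ε, hε, hball⟩ := Metric.isOpen_iff.1 hT.isOpen_compl _ hbT'
    obtain ⟨t, ht, htT⟩ := hgap (b + ε / 2)
    have hat : a + p < t := by
      by_contra! h
      linarith [hbmax ⟨htT, by linarith [ht.1], h⟩, ht.1]
    have hbt : b + p < t := lt_of_not_ge fun h ↦ hnone t htT ⟨hat.le, h⟩
    refine hball ?_ htT
    rw [Metric.mem_ball, Real.dist_eq, abs_lt]
    constructor <;> linarith [ht.2]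
  exact ⟨a, ha, b, hbT, c, hcT, ⟨hab, hba⟩, ⟨by linarith [hc.1], hc.2⟩, by linarith [hc.2],
    by linarith [hc.1]⟩

lemma measureReal_add_pi_mul_sq_le (hK : IsCompact K) (hρ : 0 < ρ)
    (hcontact : ∀ v : ℂ, ∃ u ∈ contactDirections K 0 ρ, 0 ≤ ⟪v, u⟫) :
    volume.real K + π * ρ ^ 2 ≤ ρ * ∫ θ in 0..2 * π, supportFun K (Circle.exp θ) := by
  have hclosed : IsClosed {t : ℝ | (Circle.exp t : ℂ) ∈ contactDirections K 0 ρ} :=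
    (isClosed_contactDirections hK.isClosed 0 ρ).preimage (by fun_prop)
  obtain ⟨a, ha, b, hb, c, hc, hab, hbc, hca⟩ := exists_triple_of_forall_exists_mem_Icc hclosed
    pi_pos (exists_circleExp_mem_contactDirections hcontact)
  have ha' : (Circle.exp (a + 2 * π) : ℂ) ∈ contactDirections K 0 ρ := by
    rwa [Circle.periodic_exp]
  have hint (x y : ℝ) := intervalIntegrable_supportFun_circleExp hK ρ x y
  have hperiodic : Function.Periodic
      (fun φ ↦ ρ * supportFun K (Circle.exp φ) - ρ ^ 2 / 2) (2 * π) := fun φ ↦ by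
    simp only [Circle.periodic_exp φ]
  have harea : volume.real K ≤
      ∫ φ in 0..2 * π, (ρ * supportFun K (Circle.exp φ) - ρ ^ 2 / 2) := calc
    volume.real K = volume.real (K ∩ sector a (a + 2 * π)) := by
        rw [sector_add_two_pi, inter_univ]
    _ ≤ volume.real (K ∩ sector a b) + volume.real (K ∩ sector b c) +
          volume.real (K ∩ sector c (a + 2 * π)) :=
        (measureReal_inter_sector_le_add hK a c _).trans
          (add_le_add_left (measureReal_inter_sector_le_add hK a b c) _)
    _ ≤ _ := add_le_add (add_le_add
          (measureReal_inter_sector_le hK hρ hab.1 (by linarith [hab.2]) ha hb)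
          (measureReal_inter_sector_le hK hρ hbc.1 (by linarith [hbc.2]) hb hc))
          (measureReal_inter_sector_le hK hρ hca.1 (by linarith [hca.2]) hc ha')
    _ = ∫ φ in 0..2 * π, (ρ * supportFun K (Circle.exp φ) - ρ ^ 2 / 2) := by
        rw [intervalIntegral.integral_add_adjacent_intervals (hint a b) (hint b c),
          intervalIntegral.integral_add_adjacent_intervals (hint a c) (hint c _),
          hperiodic.intervalIntegral_add_eq a 0, zero_add]
  rw [intervalIntegral.integral_sub, intervalIntegral.integral_const_mul,
    intervalIntegral.integral_const, smul_eq_mul] at harea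
  · linarith
  · exact ((continuous_supportFun_circleExp hK).const_mul ρ).intervalIntegrable _ _
  · exact intervalIntegrable_const

end SectorArea

section Length

lemma two_mul_dist_le_sum_dist {X : Type*} [PseudoMetricSpace X] {f : ℕ → X} {n i j : ℕ}
    (h : f 0 = f n) (hi : i ≤ n) (hj : j ≤ n) :
    2 * dist (f i) (f j) ≤ ∑ k ∈ Finset.range n, dist (f k) (f (k + 1)) := by
  wlog hij : i ≤ j generalizing i j
  · rw [dist_comm]
    exact this hj hi (le_of_not_ge hij)
  have houter : dist (f i) (f j) ≤ dist (f 0) (f i) + dist (f j) (f n) := by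
    rw [h, dist_comm (f n), dist_comm (f j)]
    exact dist_triangle _ _ _
  rw [Finset.range_eq_Ico, ← Finset.sum_Ico_consecutive _ (Nat.zero_le j) hj,
    ← Finset.sum_Ico_consecutive _ (Nat.zero_le i) hij]
  linarith [dist_le_Ico_sum_dist f (Nat.zero_le i), dist_le_Ico_sum_dist f hij,
    dist_le_Ico_sum_dist f hj]

lemma exists_monotone_forall_exists_dist_lt {X : Type*} [PseudoMetricSpace X] {γ : ℝ → X}
    {a b ε : ℝ} (hab : a ≤ b) (hγ : ContinuousOn γ (Icc a b)) (hε : 0 < ε) :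
    ∃ (t : ℕ → ℝ) (n : ℕ), Monotone t ∧ (∀ k, t k ∈ Icc a b) ∧ t 0 = a ∧ t n = b ∧
      ∀ s ∈ Icc a b, ∃ k ≤ n, dist (γ s) (γ (t k)) < ε := by
  let U (x : X) : Set (Icc a b) := (Icc a b).domRestrict γ ⁻¹' Metric.ball x (ε / 2)
  obtain ⟨t, ht0, hmono, ⟨n, hn⟩, hsub⟩ := exists_monotone_Icc_subset_open_cover_Icc hab
    (fun x ↦ Metric.isOpen_ball.preimage (continuousOn_iff_continuous_domRestrict.1 hγ) : ∀ x,
      IsOpen (U x))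
    fun s _ ↦ mem_iUnion.2 ⟨γ s, Metric.mem_ball_self (half_pos hε)⟩
  refine ⟨fun k ↦ t k, n, hmono, fun k ↦ (t k).2, ht0, hn n le_rfl, fun s hs ↦ ?_⟩
  rcases hs.1.eq_or_lt with rfl | has
  · exact ⟨0, n.zero_le, by simpa [ht0] using hε⟩
  have hsn : (⟨s, hs⟩ : Icc a b) ∈ Ioc (t 0) (t n) :=
    ⟨by rwa [← Subtype.coe_lt_coe, ht0], by simpa [← Subtype.coe_le_coe, hn n le_rfl] using hs.2⟩
  rw [← hmono.biUnion_Ico_Ioc_map_succ] at hsn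
  obtain ⟨k, hk, hsk⟩ := mem_iUnion₂.1 hsn
  obtain ⟨x, hx⟩ := hsub k
  have hs_ball : dist (γ s) x < ε / 2 := hx (Ioc_subset_Icc_self hsk)
  have ht_ball : dist (γ (t k)) x < ε / 2 := hx (left_mem_Icc.2 (hmono k.le_succ))
  exact ⟨k, hk.2.le, by linarith [dist_triangle_right (γ s) (γ (t k)) x]⟩

/-- A closed chain passing near the two points of `frontier K` extremal in the directions `±u` runs
through the width of `K` in direction `u` twice. -/
lemma two_mul_supportFun_add_le_sum_abs_inner {E : Type*} [NormedAddCommGroup E]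
    [InnerProductSpace ℝ E] {K : Set E} (hK : IsCompact K) (hne : K.Nonempty) {f : ℕ → E} {n : ℕ}
    {ε : ℝ} (hf : f 0 = f n) (hnear : ∀ z ∈ frontier K, ∃ k ≤ n, dist z (f k) < ε) {u : E}
    (hu : ‖u‖ = 1) :
    2 * (supportFun K u + supportFun K (-u)) ≤
      ∑ k ∈ Finset.range n, |⟪u, f (k + 1) - f k⟫| + 4 * ε := by
  have happrox {v : E} (hv : ‖v‖ = 1) : ∃ k ≤ n, supportFun K v ≤ ⟪v, f k⟫ + ε := by
    obtain ⟨z, hz, hsupp⟩ := exists_inner_eq_supportFun hK hne v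
    have hv0 : v ≠ 0 := norm_ne_zero_iff.1 (hv ▸ one_ne_zero)
    obtain ⟨k, hk, hdist⟩ := hnear z (mem_frontier_of_inner_eq_supportFun hK hv0 hz hsupp)
    have hinner := real_inner_le_norm v (z - f k)
    rw [hv, one_mul, ← dist_eq_norm, inner_sub_right, hsupp] at hinner
    exact ⟨k, hk, by linarith⟩
  obtain ⟨i, hi, hile⟩ := happrox hu
  obtain ⟨j, hj, hjle⟩ := happrox ((norm_neg u).trans hu)
  have hchain := two_mul_dist_le_sum_dist (f := fun k ↦ ⟪u, f k⟫) (congrArg _ hf) hi hj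
  simp only [Real.dist_eq, ← inner_sub_right] at hchain
  simp only [inner_sub_right, abs_sub_comm] at hchain ⊢
  rw [inner_neg_left] at hjle
  linarith [le_abs_self (⟪u, f i⟫ - ⟪u, f j⟫)]

lemma integral_abs_cos_sub (ψ : ℝ) : ∫ θ in 0..2 * π, |Real.cos (ψ - θ)| = 4 := by
  have hperiodic : Function.Periodic (fun x ↦ |Real.cos x|) π := fun x ↦ by simp
  have hint (a b : ℝ) : IntervalIntegrable (fun x ↦ |Real.cos x|) volume a b :=
    Continuous.intervalIntegrable (by fun_prop) a b
  have hhalf : ∫ x in -(π / 2)..π / 2, |Real.cos x| = 2 := by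
    have habs : EqOn (fun x ↦ |Real.cos x|) Real.cos (uIcc (-(π / 2)) (π / 2)) := fun x hx ↦ by
      rw [uIcc_of_le (by linarith [Real.pi_pos])] at hx
      exact abs_of_nonneg (Real.cos_nonneg_of_mem_Icc hx)
    rw [intervalIntegral.integral_congr habs, integral_cos, Real.sin_neg, Real.sin_pi_div_two]
    norm_num
  calc ∫ θ in 0..2 * π, |Real.cos (ψ - θ)|
    _ = ∫ x in ψ - 2 * π..ψ - 2 * π + (2 : ℤ) • π, |Real.cos x| := by
        rw [intervalIntegral.integral_comp_sub_left (fun x ↦ |Real.cos x|)]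
        simp
    _ = 2 * ∫ x in -(π / 2)..-(π / 2) + π, |Real.cos x| := by
        rw [hperiodic.intervalIntegral_add_zsmul_eq 2 _ hint,
          hperiodic.intervalIntegral_add_eq _ (-(π / 2)), zsmul_eq_mul, Int.cast_ofNat]
    _ = 4 := by
        rw [show -(π / 2) + π = π / 2 by ring, hhalf]
        norm_num

lemma integral_abs_inner_circleExp (z : ℂ) :
    ∫ θ in 0..2 * π, |⟪(Circle.exp θ : ℂ), z⟫| = 4 * ‖z‖ := by
  have hinner (θ : ℝ) : |⟪(Circle.exp θ : ℂ), z⟫| = ‖z‖ * |Real.cos (z.arg - θ)| := by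
    conv_lhs => rw [← Complex.norm_mul_exp_arg_mul_I z, ← Circle.coe_exp, ← Complex.real_smul]
    rw [real_inner_smul_right, inner_circleExp_circleExp, abs_mul, abs_norm]
  simp_rw [hinner, intervalIntegral.integral_const_mul, integral_abs_cos_sub, mul_comm]

variable {K : Set ℂ}

lemma integral_supportFun_neg_circleExp (K : Set ℂ) :
    ∫ θ in 0..2 * π, supportFun K (-Circle.exp θ) =
      ∫ θ in 0..2 * π, supportFun K (Circle.exp θ) := by
  have hperiodic : Function.Periodic (fun θ ↦ supportFun K (Circle.exp θ)) (2 * π) := fun θ ↦ by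
    simp only [Circle.periodic_exp θ]
  have hneg (θ : ℝ) : -(Circle.exp θ : ℂ) = Circle.exp (θ + π) := by
    simp [Circle.exp_add, Circle.coe_exp]
  simp_rw [hneg]
  rw [intervalIntegral.integral_comp_add_right (fun θ ↦ supportFun K (Circle.exp θ)), zero_add,
    add_comm, hperiodic.intervalIntegral_add_eq π 0, zero_add]

/-- Averaging the one-dimensional estimate over all directions. -/
lemma integral_supportFun_le_sum_dist (hK : IsCompact K) (hne : K.Nonempty) {f : ℕ → ℂ} {n : ℕ}
    {ε : ℝ} (hf : f 0 = f n) (hnear : ∀ z ∈ frontier K, ∃ k ≤ n, dist z (f k) < ε) :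
    ∫ θ in 0..2 * π, supportFun K (Circle.exp θ) ≤
      ∑ k ∈ Finset.range n, dist (f (k + 1)) (f k) + 2 * π * ε := by
  have hcont := continuous_supportFun_circleExp hK
  have hcont_neg : Continuous fun θ : ℝ ↦ supportFun K (-Circle.exp θ) :=
    (continuous_supportFun hK).comp (by fun_prop)
  have hcont_inner (k : ℕ) : Continuous fun θ : ℝ ↦ |⟪(Circle.exp θ : ℂ), f (k + 1) - f k⟫| := by
    fun_prop
  have hmono : ∫ θ in 0..2 * π, 2 * (supportFun K (Circle.exp θ) + supportFun K (-Circle.exp θ)) ≤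
      ∫ θ in 0..2 * π,
        (∑ k ∈ Finset.range n, |⟪(Circle.exp θ : ℂ), f (k + 1) - f k⟫| + 4 * ε) := by
    refine intervalIntegral.integral_mono_on (by positivity)
      (Continuous.intervalIntegrable (by fun_prop) _ _)
      (Continuous.intervalIntegrable (by fun_prop) _ _) fun θ _ ↦ ?_
    exact two_mul_supportFun_add_le_sum_abs_inner hK hne hf hnear (Circle.norm_coe _)
  rw [intervalIntegral.integral_const_mul, intervalIntegral.integral_add
      (hcont.intervalIntegrable _ _) (hcont_neg.intervalIntegrable _ _),
    integral_supportFun_neg_circleExp, intervalIntegral.integral_add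
      (Continuous.intervalIntegrable (by fun_prop) _ _) intervalIntegrable_const,
    intervalIntegral.integral_finsetSum fun k _ ↦ (hcont_inner k).intervalIntegrable _ _,
    intervalIntegral.integral_const, smul_eq_mul] at hmono
  simp only [integral_abs_inner_circleExp, ← Finset.mul_sum, ← dist_eq_norm] at hmono
  linarith

lemma ofReal_integral_supportFun_le_eVariationOn (hK : IsCompact K) (hne : K.Nonempty) {γ : ℝ → ℂ}
    {a b : ℝ} (hab : a ≤ b) (hγ : ContinuousOn γ (Icc a b)) (hclosed : γ a = γ b)
    (hfrontier : frontier K ⊆ γ '' Icc a b) :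
    ENNReal.ofReal (∫ θ in 0..2 * π, supportFun K (Circle.exp θ)) ≤ eVariationOn γ (Icc a b) := by
  refine ENNReal.le_of_forall_pos_le_add fun ε hε _ ↦ ?_
  have hδ : 0 < (ε : ℝ) / (2 * π) := by positivity
  obtain ⟨t, n, hmono, hmem, rfl, rfl, hnear⟩ := exists_monotone_forall_exists_dist_lt hab hγ hδ
  have hle := integral_supportFun_le_sum_dist hK hne (f := γ ∘ t) hclosed fun z hz ↦ by
    obtain ⟨s, hs, rfl⟩ := hfrontier hz
    exact hnear s hs
  rw [mul_div_cancel₀ _ (by positivity)] at hle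
  refine (ENNReal.ofReal_le_ofReal hle).trans ?_
  rw [ENNReal.ofReal_add (by positivity) ε.coe_nonneg, ENNReal.ofReal_coe_nnreal,
    ENNReal.ofReal_sum_of_nonneg fun _ _ ↦ dist_nonneg]
  simp only [← edist_dist]
  gcongr
  exact eVariationOn.sum_le hmono hmem

end Length

section Variation

/-- Each step of a partition crossing the level `c` produces its own solution of `f t = c`. -/
lemma encard_setOf_mem_uIoo_le {f : ℝ → ℝ} {s : Set ℝ} (hs : s.OrdConnected)
    (hf : ContinuousOn f s) {u : ℕ → ℝ} (hu : Monotone u) (hus : ∀ i, u i ∈ s) (c : ℝ) :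
    {i | c ∈ uIoo (f (u i)) (f (u (i + 1)))}.encard ≤ {t ∈ s | f t = c}.encard := by
  have hcross (i : ℕ) (hi : c ∈ uIoo (f (u i)) (f (u (i + 1)))) :
      ∃ t ∈ Ioo (u i) (u (i + 1)), t ∈ s ∧ f t = c := by
    have hsub : uIcc (u i) (u (i + 1)) ⊆ s := hs.uIcc_subset (hus i) (hus (i + 1))
    obtain ⟨t, ht, rfl⟩ := intermediate_value_uIcc (hf.mono hsub) (uIoo_subset_uIcc_self hi)
    have hts := hsub ht
    rw [uIcc_of_le (hu i.le_succ)] at ht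
    refine ⟨t, ⟨ht.1.lt_of_ne ?_, ht.2.lt_of_ne ?_⟩, hts, rfl⟩
    · rintro rfl
      simp at hi
    · rintro rfl
      simp at hi
  choose! τ hτ hτs using hcross
  refine encard_le_encard_of_injOn (f := τ) hτs fun i hi j hj hij ↦ ?_
  by_contra hne
  wlog hlt : i < j generalizing i j
  · exact this j hj i hi hij.symm (Ne.symm hne) (by omega)
  linarith [(hτ i hi).2, (hτ j hj).1, hu (Nat.succ_le_of_lt hlt)]

/-- The easy half of Banach's indicatrix theorem. -/
lemma eVariationOn_le_lintegral_encard {f : ℝ → ℝ} {s : Set ℝ} (hs : s.OrdConnected)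
    (hf : ContinuousOn f s) : eVariationOn f s ≤ ∫⁻ c, ({t ∈ s | f t = c}.encard : ℝ≥0∞) := by
  refine iSup_le fun ⟨n, u, hu, hus⟩ ↦ ?_
  have hmeas (i : ℕ) : MeasurableSet (uIoo (f (u i)) (f (u (i + 1)))) := measurableSet_Ioo
  have hstep (i : ℕ) : edist (f (u (i + 1))) (f (u i)) =
      ∫⁻ c, (uIoo (f (u i)) (f (u (i + 1)))).indicator 1 c := by
    rw [lintegral_indicator_one (hmeas i), Real.volume_uIoo, edist_dist, Real.dist_eq]
  simp only [hstep]
  rw [← lintegral_finsetSum _ fun i _ ↦ measurable_one.indicator (hmeas i)]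
  refine lintegral_mono fun c ↦ ?_
  classical
  have hcard : ∑ i ∈ Finset.range n, (uIoo (f (u i)) (f (u (i + 1)))).indicator (1 : ℝ → ℝ≥0∞) c =
      ((Finset.range n).filter fun i ↦ c ∈ uIoo (f (u i)) (f (u (i + 1)))).card := by
    simp [indicator_apply]
  rw [hcard, ← ENat.toENNReal_coe, ← encard_coe_eq_coe_finsetCard]
  refine ENat.toENNReal_mono ((encard_mono fun i hi ↦ ?_).trans
    (encard_setOf_mem_uIoo_le hs hf hu hus c))
  exact (Finset.mem_filter.1 hi).2

lemma boundedVariationOn_pi {α ι : Type*} [LinearOrder α] [Fintype ι] {X : ι → Type*}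
    [∀ i, PseudoEMetricSpace (X i)] {f : α → ∀ i, X i} {s : Set α}
    (hf : ∀ i, BoundedVariationOn (fun t ↦ f t i) s) : BoundedVariationOn f s := by
  have hsum : eVariationOn f s ≤ ∑ i, eVariationOn (fun t ↦ f t i) s := by
    refine iSup_le fun ⟨n, u, hu, hus⟩ ↦ ?_
    calc ∑ k ∈ Finset.range n, edist (f (u (k + 1))) (f (u k))
      _ ≤ ∑ k ∈ Finset.range n, ∑ i, edist (f (u (k + 1)) i) (f (u k) i) :=
          Finset.sum_le_sum fun k _ ↦ edist_pi_le_iff.2 fun i ↦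
            Finset.single_le_sum (f := fun i ↦ edist (f (u (k + 1)) i) (f (u k) i))
              (fun _ _ ↦ zero_le) (Finset.mem_univ i)
      _ = ∑ i, ∑ k ∈ Finset.range n, edist (f (u (k + 1)) i) (f (u k) i) := Finset.sum_comm
      _ ≤ ∑ i, eVariationOn (fun t ↦ f t i) s :=
          Finset.sum_le_sum fun i _ ↦ eVariationOn.sum_le hu hus
  exact ne_top_of_le_ne_top (ENNReal.sum_ne_top.2 fun i _ ↦ hf i) hsum

variable {V : Type*} [NormedAddCommGroup V] [NormedSpace ℝ V] {M : Set V} {w p q : V}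

lemma eq_of_mem_frontier_of_sameRay (hM : Convex ℝ M) (hw : w ∈ interior M) (hp : p ∈ frontier M)
    (hq : q ∈ frontier M) (hray : SameRay ℝ (p - w) (q - w)) : p = q := by
  have hne {x : V} (hx : x ∈ frontier M) : w ≠ x := fun h ↦ hx.2 (h ▸ hw)
  have heq {x y : V} (hx : x ∈ frontier M) (hy : y ∈ frontier M) (h : Wbtw ℝ w x y) : x = y := by
    by_contra hxy
    exact hx.2 (hM.openSegment_interior_closure_subset_interior hw hy.1
      (mem_openSegment_of_ne_left_right (hne hx) (Ne.symm hxy) h.mem_segment))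
  rw [← vsub_eq_sub, ← vsub_eq_sub] at hray
  rcases wbtw_total_of_sameRay_vsub_left hray with h | h
  · exact heq hp hq h
  · exact (heq hq hp h).symm

/-- On either side of the interior point `w`, the line carries at most one frontier point. -/
lemma encard_frontier_inter_fiber_le_two (hV : Module.finrank ℝ V = 2) (hM : Convex ℝ M)
    (hw : w ∈ interior M) {ℓ : V →L[ℝ] ℝ} (hℓ : ℓ ≠ 0) :
    {p ∈ frontier M | ℓ p = ℓ w}.encard ≤ 2 := by
  have : FiniteDimensional ℝ V := .of_finrank_pos (by omega)
  rcases {p ∈ frontier M | ℓ p = ℓ w}.eq_empty_or_nonempty with hempty | ⟨p₀, hp₀, hℓp₀⟩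
  · simp [hempty]
  have hker : Module.finrank ℝ (LinearMap.ker (ℓ : V →ₗ[ℝ] ℝ)) = 1 := by
    have := Module.Dual.finrank_ker_add_one_of_ne_zero (f := (ℓ : V →ₗ[ℝ] ℝ))
      (by exact_mod_cast hℓ)
    omega
  have hp₀w : p₀ - w ≠ 0 := sub_ne_zero.2 fun h ↦ hp₀.2 (h ▸ hw)
  have hopposite : ∀ p ∈ frontier M, ℓ p = ℓ w → p ≠ p₀ →
      ∃ t : ℝ, 0 < t ∧ p - w = t • -(p₀ - w) := by
    intro p hp hℓp hne
    obtain ⟨t, ht⟩ := (finrank_eq_one_iff_of_nonzero' (⟨p₀ - w, by simp [hℓp₀]⟩ :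
      LinearMap.ker (ℓ : V →ₗ[ℝ] ℝ)) (by simpa using hp₀w)).1 hker ⟨p - w, by simp [hℓp]⟩
    have htp : t • (p₀ - w) = p - w := congrArg Subtype.val ht
    refine ⟨-t, neg_pos.2 (lt_of_not_ge fun h0 ↦ hne ?_), by rw [smul_neg, neg_smul, neg_neg, htp]⟩
    refine eq_of_mem_frontier_of_sameRay hM hw hp hp₀ ?_
    rw [← htp]
    exact SameRay.sameRay_nonneg_smul_left _ h0
  have hp₀mem : p₀ ∈ {p ∈ frontier M | ℓ p = ℓ w} := ⟨hp₀, hℓp₀⟩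
  rw [← encard_sdiff_singleton_add_one hp₀mem, ← one_add_one_eq_two]
  gcongr
  refine encard_le_one_iff.2 fun p q ⟨⟨hp, hℓp⟩, hpne⟩ ⟨⟨hq, hℓq⟩, hqne⟩ ↦ ?_
  obtain ⟨s, hs, hps⟩ := hopposite p hp hℓp hpne
  obtain ⟨t, ht, hqt⟩ := hopposite q hq hℓq hqne
  refine eq_of_mem_frontier_of_sameRay hM hw hp hq ?_
  rw [hps, hqt]
  exact (SameRay.sameRay_pos_smul_left _ hs).trans (SameRay.sameRay_pos_smul_right _ ht)
    fun h ↦ absurd (neg_eq_zero.1 h) hp₀w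

variable {γ : ℝ → V} {a b : ℝ}

lemma encard_setOf_comp_eq_le_three (hV : Module.finrank ℝ V = 2) (hM : Convex ℝ M)
    (hinj : InjOn γ (Ico a b)) (hmaps : MapsTo γ (Icc a b) (frontier M)) (hw : w ∈ interior M)
    {ℓ : V →L[ℝ] ℝ} (hℓ : ℓ ≠ 0) : {t ∈ Icc a b | ℓ (γ t) = ℓ w}.encard ≤ 3 := by
  have hsub : {t ∈ Icc a b | ℓ (γ t) = ℓ w} ⊆ insert b {t ∈ Ico a b | ℓ (γ t) = ℓ w} := by
    rintro t ⟨ht, htw⟩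
    exact ht.2.eq_or_lt.imp_right fun hlt ↦ ⟨⟨ht.1, hlt⟩, htw⟩
  calc {t ∈ Icc a b | ℓ (γ t) = ℓ w}.encard
    _ ≤ {t ∈ Ico a b | ℓ (γ t) = ℓ w}.encard + 1 := (encard_mono hsub).trans (encard_insert_le _ _)
    _ ≤ {p ∈ frontier M | ℓ p = ℓ w}.encard + 1 := by
        gcongr
        exact encard_le_encard_of_injOn (f := γ)
          (fun t ht ↦ ⟨hmaps (Ico_subset_Icc_self ht.1), ht.2⟩) (hinj.mono fun t ht ↦ ht.1)
    _ ≤ 2 + 1 := by grw [encard_frontier_inter_fiber_le_two hV hM hw hℓ]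
    _ = 3 := by norm_num

lemma boundedVariationOn_comp_of_mapsTo_frontier (hV : Module.finrank ℝ V = 2) (hM : Convex ℝ M)
    (hbdd : Bornology.IsBounded M) (hint : (interior M).Nonempty) (hγ : ContinuousOn γ (Icc a b))
    (hinj : InjOn γ (Ico a b)) (hmaps : MapsTo γ (Icc a b) (frontier M)) {ℓ : V →L[ℝ] ℝ}
    (hℓ : ℓ ≠ 0) : BoundedVariationOn (fun t ↦ ℓ (γ t)) (Icc a b) := by
  have hJ : Convex ℝ (ℓ '' interior M) := hM.interior.linear_image (ℓ : V →ₗ[ℝ] ℝ)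
  have hJbdd : Bornology.IsBounded (ℓ '' interior M) :=
    ℓ.lipschitz.isBounded_image (hbdd.subset interior_subset)
  have hfiber : ∀ᵐ c, ({t ∈ Icc a b | ℓ (γ t) = c}.encard : ℝ≥0∞) ≤
      (closure (ℓ '' interior M)).indicator 3 c := by
    filter_upwards [measure_eq_zero_iff_ae_notMem.1 (hJ.addHaar_frontier volume)] with c hc
    by_cases hcJ : c ∈ closure (ℓ '' interior M)
    · obtain ⟨w, hw, rfl⟩ := interior_subset (not_not.1 fun h ↦ hc ⟨hcJ, h⟩)
      rw [indicator_of_mem hcJ]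
      exact ENat.toENNReal_mono (encard_setOf_comp_eq_le_three hV hM hinj hmaps hw hℓ)
    · have hempty : {t ∈ Icc a b | ℓ (γ t) = c} = ∅ := by
        refine eq_empty_of_forall_notMem fun t ⟨ht, htc⟩ ↦ hcJ (htc ▸ ?_)
        refine image_closure_subset_closure_image ℓ.continuous (mem_image_of_mem ℓ ?_)
        rw [hM.closure_interior_eq_closure_of_nonempty_interior hint]
        exact frontier_subset_closure (hmaps ht)
      rw [hempty, encard_empty, ENat.toENNReal_zero]
      exact zero_le
  refine ne_top_of_le_ne_top ?_ ((eVariationOn_le_lintegral_encard ordConnected_Icc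
    (ℓ.continuous.comp_continuousOn hγ)).trans (lintegral_mono_ae hfiber))
  rw [lintegral_indicator isClosed_closure.measurableSet]
  simpa using ENNReal.mul_ne_top (by simp) hJbdd.closure.measure_lt_top.ne

lemma boundedVariationOn_of_mapsTo_frontier (hV : Module.finrank ℝ V = 2) (hM : Convex ℝ M)
    (hbdd : Bornology.IsBounded M) (hint : (interior M).Nonempty) (hγ : ContinuousOn γ (Icc a b))
    (hinj : InjOn γ (Ico a b)) (hmaps : MapsTo γ (Icc a b) (frontier M)) :
    BoundedVariationOn γ (Icc a b) := by
  have : FiniteDimensional ℝ V := .of_finrank_pos (by omega)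
  obtain ⟨e⟩ : Nonempty (V ≃L[ℝ] (Fin 2 → ℝ)) :=
    ⟨.ofFinrankEq (hV.trans (Module.finrank_fin_fun ℝ).symm)⟩
  have hcoord : BoundedVariationOn (fun t ↦ e (γ t)) (Icc a b) := boundedVariationOn_pi fun i ↦ by
    refine boundedVariationOn_comp_of_mapsTo_frontier hV hM hbdd hint hγ hinj hmaps
      (ℓ := (ContinuousLinearMap.proj i).comp (e : V →L[ℝ] (Fin 2 → ℝ))) fun h ↦ ?_
    simpa using congr($h (e.symm (Pi.single i 1)))
  simpa [Function.comp_def] using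
    (e.symm : (Fin 2 → ℝ) →L[ℝ] V).lipschitz.comp_boundedVariationOn hcoord

end Variation

section Planar

open Metric

lemma exists_affineIsometryEquiv_complex_eq_zero (c : EuclideanSpace ℝ (Fin 2)) :
    ∃ f : EuclideanSpace ℝ (Fin 2) ≃ᵃⁱ[ℝ] ℂ, f c = 0 :=
  ⟨(AffineIsometryEquiv.vaddConst ℝ c).symm.trans
    Complex.orthonormalBasisOneI.repr.symm.toAffineIsometryEquiv, by simp⟩

variable {K : Set (EuclideanSpace ℝ (Fin 2))}

lemma area_add_pi_mul_sq_le_mul_length (hK : IsCompact K) (hne : K.Nonempty)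
    {γ : ℝ → EuclideanSpace ℝ (Fin 2)} {a b : ℝ} (hab : a ≤ b) (hγ : ContinuousOn γ (Icc a b))
    (hclosed : γ a = γ b) (hfrontier : frontier K ⊆ γ '' Icc a b)
    (hfinite : BoundedVariationOn γ (Icc a b)) {c : EuclideanSpace ℝ (Fin 2)} {ρ : ℝ} (hρ : 0 < ρ)
    (hcontact : ∀ v, ∃ u ∈ contactDirections K c ρ, 0 ≤ ⟪v, u⟫) :
    volume.real K + π * ρ ^ 2 ≤ ρ * (eVariationOn γ (Icc a b)).toReal := by
  obtain ⟨f, hf⟩ := exists_affineIsometryEquiv_complex_eq_zero c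
  have hfK : IsCompact (f '' K) := hK.image f.continuous
  have hvolume : volume.real (f '' K) = volume.real K :=
    congrArg ENNReal.toReal (volume_image_of_isometry (by simp) f.isometry K)
  have hvariation : eVariationOn (f ∘ γ) (Icc a b) = eVariationOn γ (Icc a b) := by
    simp only [eVariationOn, Function.comp_apply, f.isometry.edist_eq]
  have hcontact' (v : ℂ) : ∃ u ∈ contactDirections (f '' K) 0 ρ, 0 ≤ ⟪v, u⟫ := by
    obtain ⟨u, hu, huv⟩ := hcontact (f.linearIsometryEquiv.symm v)
    refine ⟨_, hf ▸ mem_contactDirections_image f hu, ?_⟩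
    rwa [← f.linearIsometryEquiv.inner_map_map, LinearIsometryEquiv.apply_symm_apply] at huv
  have hfrontier' : frontier (f '' K) ⊆ (f ∘ γ) '' Icc a b := by
    rw [image_comp, ← f.coe_toHomeomorph, ← f.toHomeomorph.image_frontier]
    exact image_mono hfrontier
  have hlength := ofReal_integral_supportFun_le_eVariationOn hfK (hne.image f) hab
    (f.continuous.comp_continuousOn hγ) (congrArg f hclosed) hfrontier'
  rw [hvariation, ENNReal.ofReal_le_iff_le_toReal hfinite] at hlength
  calc volume.real K + π * ρ ^ 2
    _ ≤ ρ * ∫ θ in 0..2 * π, supportFun (f '' K) (Circle.exp θ) :=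
        hvolume ▸ measureReal_add_pi_mul_sq_le hfK hρ hcontact'
    _ ≤ ρ * (eVariationOn γ (Icc a b)).toReal := by gcongr

lemma isGreatest_inradius (hK : IsCompact K) (hne : K.Nonempty) :
    IsGreatest {ρ : ℝ | 0 ≤ ρ ∧ ∃ c, closedBall c ρ ⊆ K} (inradius K) := by
  obtain ⟨x, hx⟩ := hne
  exact (isCompact_radius_closedBall_subset hK).isGreatest_sSup ⟨0, le_rfl, x, by simpa using hx⟩

lemma isLeast_circumradius (hK : Bornology.IsBounded K) (hne : K.Nonempty) :
    IsLeast {ρ : ℝ | 0 ≤ ρ ∧ ∃ c, K ⊆ closedBall c ρ} (circumradius K) := by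
  obtain ⟨R, hR⟩ := exists_isLeast_radius_subset_closedBall hK hne
  rwa [circumradius, hR.csInf_eq]

lemma inradius_pos (hK : IsCompact K) (hint : (interior K).Nonempty) : 0 < inradius K := by
  obtain ⟨x, hx⟩ := hint
  obtain ⟨ε, hε, hball⟩ := nhds_basis_closedBall.mem_iff.1 (mem_interior_iff_mem_nhds.1 hx)
  exact hε.trans_le ((isGreatest_inradius hK ⟨x, interior_subset hx⟩).2 ⟨hε.le, x, hball⟩)

lemma inradius_le_circumradius (hK : IsCompact K) (hne : K.Nonempty) :
    inradius K ≤ circumradius K := by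
  obtain ⟨⟨hr, c, hc⟩, -⟩ := isGreatest_inradius hK hne
  obtain ⟨⟨hR, d, hd⟩, -⟩ := isLeast_circumradius hK.isBounded hne
  have hdiam := diam_mono (hc.trans hd) isBounded_closedBall
  rw [diam_closedBall_eq _ hr, diam_closedBall_eq _ hR] at hdiam
  linarith

lemma exists_contactDirections_inradius (hconv : Convex ℝ K) (hK : IsCompact K)
    (hne : K.Nonempty) : ∃ c, ∀ v, ∃ u ∈ contactDirections K c (inradius K), 0 ≤ ⟪v, u⟫ := by
  obtain ⟨⟨hr, c, hc⟩, hmax⟩ := isGreatest_inradius hK hne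
  exact ⟨c, exists_mem_contactDirections_of_inscribed hconv hK hr hc
    fun c' r' hr' hc' ↦ hmax ⟨hr', c', hc'⟩⟩

lemma exists_contactDirections_circumradius (hK : IsCompact K) (hne : K.Nonempty)
    (hR : 0 < circumradius K) :
    ∃ c, ∀ v, ∃ u ∈ contactDirections K c (circumradius K), 0 ≤ ⟪v, u⟫ := by
  obtain ⟨⟨-, c, hc⟩, hmin⟩ := isLeast_circumradius hK.isBounded hne
  exact ⟨c, exists_mem_contactDirections_of_circumscribed hK hR hc
    fun c' r' hr' hc' ↦ hmin ⟨hr', c', hc'⟩⟩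

end Planar

lemma sq_mul_sub_sq_le_discrim {a b c x y : ℝ} (hx : a * (x * x) + b * x + c ≤ 0)
    (hy : a * (y * y) + b * y + c ≤ 0) (ha : 0 ≤ a) : a ^ 2 * (x - y) ^ 2 ≤ discrim a b c := by
  have hsq {z : ℝ} (hz : a * (z * z) + b * z + c ≤ 0) : (2 * a * z + b) ^ 2 ≤ discrim a b c := by
    rw [discrim]
    linarith [mul_nonpos_of_nonneg_of_nonpos ha hz]
  linarith [hsq hx, hsq hy, sq_nonneg ((2 * a * x + b) + (2 * a * y + b))]

theorem bonnesen_type_inequality_inradius_circumradius_general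
    {K : Set (EuclideanSpace ℝ (Fin 2))} (hcomp : IsCompact K) (hconv : Convex ℝ K)
    (hint : (interior K).Nonempty) {γ : ℝ → EuclideanSpace ℝ (Fin 2)} {a b : ℝ} (hab : a ≤ b)
    (hγcont : ContinuousOn γ (Icc a b)) (hγclosed : γ a = γ b)
    (hγimg : frontier K ⊆ γ '' Icc a b) (hγfin : BoundedVariationOn γ (Icc a b)) :
    volume.real K ^ 2 * (1 / inradius K - 1 / circumradius K) ^ 2 ≤
      (eVariationOn γ (Icc a b)).toReal ^ 2 - 4 * π * volume.real K := by
  have hne := hint.mono interior_subset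
  have hr := inradius_pos hcomp hint
  have hR := hr.trans_le (inradius_le_circumradius hcomp hne)
  have hquad {ρ : ℝ} (hρ : 0 < ρ)
      (h : ∃ c, ∀ v, ∃ u ∈ contactDirections K c ρ, 0 ≤ ⟪v, u⟫) :
      volume.real K * (1 / ρ * (1 / ρ)) + -(eVariationOn γ (Icc a b)).toReal * (1 / ρ) + π ≤ 0 := by
    obtain ⟨c, hc⟩ := h
    have := area_add_pi_mul_sq_le_mul_length hcomp hne hab hγcont hγclosed hγimg hγfin hρ hc
    field_simp
    linarith
  have hdisc := sq_mul_sub_sq_le_discrim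
    (hquad hr (exists_contactDirections_inradius hconv hcomp hne))
    (hquad hR (exists_contactDirections_circumradius hcomp hne hR)) measureReal_nonneg
  rw [discrim] at hdisc
  linarith

/-- **A Bonnesen-type inequality.**  Let `K ⊆ ℝ²` be a compact convex set with nonempty
interior, of area `A`, boundary length `L`, circumradius `R` and inradius `r`; the
boundary length is the total variation of a continuous closed parametrization of the
topological boundary of `K`, injective on `[0,1)`.  Then `L² − 4πA ≥ A²(1/r − 1/R)²`. -/
theorem bonnesen_type_inequality_inradius_circumradius (K : Set (EuclideanSpace ℝ (Fin 2)))
    (hcomp : IsCompact K) (hconv : Convex ℝ K) (hint : (interior K).Nonempty)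
    (γ : ℝ → EuclideanSpace ℝ (Fin 2))
    (hγcont : ContinuousOn γ (Set.Icc 0 1))
    (hγclosed : γ 0 = γ 1)
    (hγinj : Set.InjOn γ (Set.Ico 0 1))
    (hγimg : γ '' Set.Icc 0 1 = frontier K)
    (L : ℝ) (hL : L = (eVariationOn γ (Set.Icc 0 1)).toReal) :
    (volume K).toReal ^ 2 * (1 / inradius K - 1 / circumradius K) ^ 2 ≤
      L ^ 2 - 4 * Real.pi * (volume K).toReal := by
  subst hL
  exact bonnesen_type_inequality_inradius_circumradius_general hcomp hconv hint zero_le_one hγcont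
    hγclosed hγimg.superset (boundedVariationOn_of_mapsTo_frontier finrank_euclideanSpace_fin
      hconv hcomp.isBounded hint hγcont hγinj (mapsTo_iff_image_subset.2 hγimg.subset))
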